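/- arXiv:math/0011230 — 2 statements merged into one kernel-verified Lean document; each statement's English description precedes it below -/
import Mathlib

section
/- Let ι be an index type of cardinality ℵ₁, let 𝓕₁ = ℚ(t_ν : ν ∈ ι) be the field of rational functions over ℚ in algebraically independent variables indexed by ι (the fraction field of the multivariate polynomial ring ℚ[t_ν : ν ∈ ι]), and let R = 𝓕₁[X] be the polynomial ring in one variable over 𝓕₁. Then R is a principal ideal domain of cardinality ℵ₁, and every R-module A that is ℵ₁-generated, ℵ₁-free, and not free satisfies Ext¹_R(A, R) ≠ 0; in particular, every ℵ₁-generated ℵ₁-free Whitehead R-module is free. -/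
/-!
Statement 0 (Eklof–Shelah, "Whitehead modules over large principal ideal domains",
Theorem 1): There is a slender (local, not `p`-adically complete) p.i.d. `R` of
cardinality `2 ^ ℵ₁` such that every `ℵ₁`-free `ℵ₁`-generated `R`-module is a
Whitehead module.
-/

open Cardinal

universe u

/-- The first Ext group `Ext¹_R(M, N)` (as a module, via the derived-functor `Ext`). -/
noncomputable def ext1 (R : Type u) [CommRing R] (M N : Type u) [AddCommGroup M] [Module R M]
    [AddCommGroup N] [Module R N] : ModuleCat R :=
  ((Ext R (ModuleCat.{u} R) 1).obj (Opposite.op (ModuleCat.of R M))).obj (ModuleCat.of R N)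

/-- `M` is a Whitehead `R`-module: `Ext¹_R(M, R) = 0`. -/
def IsWhitehead (R : Type u) [CommRing R] (M : Type u) [AddCommGroup M] [Module R M] : Prop :=
  Subsingleton (ext1 R M R)

/-- `M` is `κ`-generated: generated by a subset of cardinality `≤ κ`. -/
def IsGenerated (R : Type u) [Semiring R] (M : Type u) [AddCommMonoid M] [Module R M]
    (κ : Cardinal.{u}) : Prop :=
  ∃ S : Set M, #S ≤ κ ∧ Submodule.span R S = ⊤

/-- `M` is `κ`-free: every submodule generated by fewer than `κ` elements is free.
(So `ℵ₁`-free means every countably generated submodule is free.) -/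
def IsKappaFree (R : Type u) [Ring R] (M : Type u) [AddCommGroup M] [Module R M]
    (κ : Cardinal.{u}) : Prop :=
  ∀ S : Set M, #S < κ → Module.Free R (Submodule.span R S)

/-- `a` is a Cauchy sequence for the `p`-adic topology on `R`. -/
def PAdicCauchy {R : Type u} [CommRing R] (p : R) (a : ℕ → R) : Prop :=
  ∀ n : ℕ, ∃ N : ℕ, ∀ j ≥ N, ∀ k ≥ N, p ^ n ∣ (a j - a k)

/-- `L` is a limit of the sequence `a` in the `p`-adic topology on `R`. -/
def PAdicLimit {R : Type u} [CommRing R] (p : R) (a : ℕ → R) (L : R) : Prop :=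
  ∀ n : ℕ, ∃ N : ℕ, ∀ j ≥ N, p ^ n ∣ (a j - L)

/-- `R` is not complete in the `p`-adic topology: there is a `p`-adically Cauchy
sequence in `R` with no limit in `R`. -/
def NotPAdicComplete (R : Type u) [CommRing R] (p : R) : Prop :=
  ∃ a : ℕ → R, PAdicCauchy p a ∧ ∀ L : R, ¬ PAdicLimit p a L

open Polynomial in
/-- The total derivative of polynomials over the rational function field in the variables `ι`. -/
theorem exists_totalDerivative (ι : Type*) (K : Type*) [Field K] [Algebra (MvPolynomial ι ℚ) K]
    [IsFractionRing (MvPolynomial ι ℚ) K] :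
    ∃ d : K[X] →+ (ι →₀ K[X]), (∀ a b, d (a * b) = a • d b + b • d a) ∧
      ∀ i, ∃ t, d t = Finsupp.single i 1 := by
  let fstHom := (TrivSqZeroExt.fstHom K[X] K[X] (ι →₀ K[X])).toRingHom
  let x : ι → TrivSqZeroExt K[X] (ι →₀ K[X]) := fun i =>
    TrivSqZeroExt.inl (C (algebraMap (MvPolynomial ι ℚ) K (MvPolynomial.X i)))
    + TrivSqZeroExt.inr (Finsupp.single i 1)
  let φ₀ : MvPolynomial ι ℚ →+* TrivSqZeroExt K[X] (ι →₀ K[X]) := MvPolynomial.eval₂Hom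
    ((TrivSqZeroExt.inlHom K[X] (ι →₀ K[X])).comp
      (C.comp ((algebraMap (MvPolynomial ι ℚ) K).comp MvPolynomial.C))) x
  have fst_φ₀ : fstHom.comp φ₀ = C.comp (algebraMap (MvPolynomial ι ℚ) K) :=
    MvPolynomial.ringHom_ext' (Subsingleton.elim _ _) fun i => by simp [fstHom, φ₀, x]
  have isUnit_φ₀ : ∀ y : nonZeroDivisors (MvPolynomial ι ℚ), IsUnit (φ₀ y) := by
    intro y
    have h : (φ₀ y).fst = C (algebraMap (MvPolynomial ι ℚ) K y) := DFunLike.congr_fun fst_φ₀ y.1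
    rw [TrivSqZeroExt.isUnit_iff_isUnit_fst, h, isUnit_C, isUnit_iff_ne_zero]
    exact IsFractionRing.to_map_ne_zero_of_mem_nonZeroDivisors y.2
  let φ₁ : K →+* TrivSqZeroExt K[X] (ι →₀ K[X]) := IsLocalization.lift isUnit_φ₀
  have fst_φ₁ : fstHom.comp φ₁ = C := by
    refine IsLocalization.ringHom_ext (nonZeroDivisors (MvPolynomial ι ℚ)) ?_
    rw [RingHom.comp_assoc, IsLocalization.lift_comp, fst_φ₀]
  let φ : K[X] →+* TrivSqZeroExt K[X] (ι →₀ K[X]) := eval₂RingHom φ₁ (TrivSqZeroExt.inl X)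
  have fst_φ : fstHom.comp φ = RingHom.id K[X] := by
    refine Polynomial.ringHom_ext (fun a => ?_) ?_
    · simpa [φ] using DFunLike.congr_fun fst_φ₁ a
    · simp [φ, fstHom]
  have fst_φ_apply : ∀ r, (φ r).fst = r := DFunLike.congr_fun fst_φ
  refine ⟨(TrivSqZeroExt.sndHom K[X] (ι →₀ K[X])).toAddMonoidHom.comp φ.toAddMonoidHom,
    fun a b => by simp [fst_φ_apply], fun i =>
    ⟨C (algebraMap (MvPolynomial ι ℚ) K (MvPolynomial.X i)), by simp [φ, φ₁, φ₀, x]⟩⟩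

theorem cardinalMk_polynomial_fractionRing (ι : Type u) (hι : #ι = aleph 1) :
    #(Polynomial (FractionRing (MvPolynomial ι ℚ))) = aleph 1 := by
  have : Nonempty ι := mk_ne_zero_iff.1 (by rw [hι]; exact (aleph_pos 1).ne')
  rw [Polynomial.cardinalMk_eq_max, mk_fractionRing, MvPolynomial.cardinalMk_eq_max_lift, hι]
  simp [aleph0_le_aleph]

open CategoryTheory in
/-- If `Ext¹(A, R) = 0`, functionals on the relations of any projective module
mapping onto `A` extend. -/
theorem exists_extension_of_isWhitehead {R : Type u} [CommRing R] {A : Type u} [AddCommGroup A]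
    [Module R A] (hA : IsWhitehead R A) {L : Type u} [AddCommGroup L] [Module R L]
    [Module.Projective R L] (q : L →ₗ[R] A) (hq : Function.Surjective q)
    (f : LinearMap.ker q →ₗ[R] R) : ∃ g : L →ₗ[R] R, ∀ x : LinearMap.ker q, g x = f x := by
  let P : ProjectiveResolution (ModuleCat.of R A) := projectiveResolution _
  have h0 : Limits.IsZero ((P.complex.linearYonedaObj R (ModuleCat.of R R)).homology 1) := by
    refine Limits.IsZero.of_iso ?_ (P.isoExt 1 (ModuleCat.of R R)).symm
    have : Subsingleton (ext1 R A R) := hA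
    exact ModuleCat.isZero_of_subsingleton (ext1 R A R)
  rw [← HomologicalComplex.exactAt_iff_isZero_homology,
    HomologicalComplex.exactAt_iff' _ 0 1 2 (by simp) (by simp),
    ShortComplex.moduleCat_exact_iff] at h0
  have factor : ∀ f : P.complex.X 1 ⟶ ModuleCat.of R R, P.complex.d 2 1 ≫ f = 0 →
      ∃ g : P.complex.X 0 ⟶ ModuleCat.of R R, P.complex.d 1 0 ≫ g = f := fun f hf => h0 f hf
  have exact_zero := (ShortComplex.moduleCat_exact_iff _).1 P.exact₀
  let p : P.complex.X 0 →ₗ[R] A := (P.π.f 0).hom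
  let δ : P.complex.X 1 →ₗ[R] P.complex.X 0 := (P.complex.d 1 0).hom
  have hp : Function.Surjective p :=
    (ModuleCat.epi_iff_surjective (P.π.f 0)).1 inferInstance
  have hδ : ∀ y, p y = 0 → ∃ x, δ x = y := exact_zero
  have hpδ : ∀ x, p (δ x) = 0 := fun x =>
    ConcreteCategory.congr_hom P.complex_d_comp_π_f_zero x
  have hδδ : ∀ x, δ ((P.complex.d 2 1).hom x) = 0 := fun x =>
    ConcreteCategory.congr_hom (P.complex.d_comp_d 2 1 0) x
  have : Module.Projective R (P.complex.X 0) := by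
    have := P.projective 0
    exact (IsProjective.iff_projective _).2 this
  obtain ⟨u, hu⟩ := Module.projective_lifting_property q p hq
  obtain ⟨v, hv⟩ := Module.projective_lifting_property p q hp
  have hu' : ∀ x, q (u x) = p x := DFunLike.congr_fun hu
  have hv' : ∀ x, p (v x) = q x := DFunLike.congr_fun hv
  let uδ : P.complex.X 1 →ₗ[R] LinearMap.ker q :=
    (u ∘ₗ δ).codRestrict _ fun x => by simp [hu', hpδ]
  obtain ⟨G, hG⟩ := factor (ModuleCat.ofHom (f ∘ₗ uδ)) (by
    ext x
    have : uδ ((P.complex.d 2 1).hom x) = 0 := Subtype.ext (by simp [uδ, hδδ])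
    change f (uδ ((P.complex.d 2 1).hom x)) = 0
    rw [this, map_zero])
  have hG' : ∀ x, G.hom (δ x) = f (uδ x) := fun x => ConcreteCategory.congr_hom hG x
  let w : L →ₗ[R] LinearMap.ker q :=
    (u ∘ₗ v - LinearMap.id).codRestrict _ fun x => by simp [hu', hv']
  refine ⟨G.hom ∘ₗ v - f ∘ₗ w, fun x => ?_⟩
  obtain ⟨y, hy⟩ := hδ (v x) (by rw [hv']; exact x.2)
  have : uδ y - w x = x := Subtype.ext (by simp [uδ, w, hy])
  simp only [LinearMap.sub_apply, LinearMap.comp_apply]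
  rw [← hy, hG', ← map_sub, this]

section WellOrder

variable {ι : Type*} [LinearOrder ι]

theorem countable_Iic_of_countable_Iio (hc : ∀ i : ι, (Set.Iio i).Countable) (i : ι) :
    (Set.Iic i).Countable := by
  rw [← Set.Iio_insert]
  exact (hc i).insert i

theorem exists_forall_lt_of_countable [Uncountable ι] (hc : ∀ i : ι, (Set.Iio i).Countable)
    {s : Set ι} (hs : s.Countable) : ∃ b, ∀ x ∈ s, x < b := by
  by_contra! h
  refine Set.not_countable_univ (α := ι) ((hs.biUnion fun x _ =>
    countable_Iic_of_countable_Iio hc x).mono fun b _ => ?_)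
  obtain ⟨x, hx, hbx⟩ := h b
  exact Set.mem_biUnion hx hbx

/-- A family of countable sets admits arbitrarily large closed initial segments. -/
theorem exists_gt_closed_Iio [WellFoundedLT ι] [Uncountable ι] (hc : ∀ i : ι, (Set.Iio i).Countable)
    (F : ι → Set ι) (hF : ∀ i, (F i).Countable) (x : ι) :
    ∃ α, x < α ∧ ∀ ν < α, F ν ⊆ Set.Iio α := by
  have step : ∀ y, ∃ z, y < z ∧ ∀ ν ≤ y, F ν ⊆ Set.Iio z := by
    intro y
    obtain ⟨z, hz⟩ := exists_forall_lt_of_countable hc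
      (((countable_Iic_of_countable_Iio hc y).biUnion fun ν _ => hF ν).insert y)
    exact ⟨z, hz y (Set.mem_insert _ _), fun ν hν κ hκ =>
      hz κ (Set.mem_insert_of_mem _ (Set.mem_biUnion hν hκ))⟩
  choose h hlt hsub using step
  let y : ℕ → ι := fun n => h^[n] x
  have hy : ∀ n, y (n + 1) = h (y n) := fun n => Function.iterate_succ_apply' h n x
  have hbdd := exists_forall_lt_of_countable hc (Set.countable_range y)
  obtain ⟨α, hα, hmin⟩ := WellFounded.has_min (wellFounded_lt (α := ι))
    {b | ∀ z ∈ Set.range y, z < b} hbdd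
  have hlt_α : ∀ n, y n < α := fun n => hα _ ⟨n, rfl⟩
  refine ⟨α, hlt_α 0, fun ν hν κ hκ => ?_⟩
  have : ¬ ∀ z ∈ Set.range y, z < ν := fun hν' => hmin ν hν' hν
  push Not at this
  obtain ⟨_, ⟨n, rfl⟩, hn⟩ := this
  have := hsub (y n) ν hn hκ
  rw [← hy] at this
  exact lt_trans this (hlt_α (n + 1))

theorem exists_wellOrder_countable_Iio (ι : Type u) (hι : #ι = aleph 1) :
    ∃ (_ : LinearOrder ι) (_ : WellFoundedLT ι), ∀ i : ι, (Set.Iio i).Countable := by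
  obtain ⟨hl, hw, h⟩ := Cardinal.exists_ord_eq_type_lt ι
  refine ⟨hl, hw, fun i => ?_⟩
  rw [← Cardinal.le_aleph0_iff_set_countable, ← Order.lt_succ_iff, succ_aleph0, ← hι]
  exact Cardinal.mk_Iio_lt i h

end WellOrder

/-- A module with a well-ordered filtration whose successive quotients are split and free is
free. -/
theorem Module.Free.of_wellOrdered_filtration {R A I : Type*} [Ring R] [AddCommGroup A]
    [Module R A] [LinearOrder I] [WellFoundedLT I] (M C : I → Submodule R A)
    (hsup : ∀ i, (⨆ j, ⨆ (_ : j < i), M j) ⊔ C i = M i)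
    (hdisj : ∀ i, Disjoint (⨆ j, ⨆ (_ : j < i), M j) (C i))
    (htop : ⨆ i, M i = ⊤) (hfree : ∀ i, Module.Free R (C i)) : Module.Free R A := by
  have hCM : ∀ i, C i ≤ M i := fun i => hsup i ▸ le_sup_right
  have hindep : iSupIndep C := by
    rw [iSupIndep_iff_finsetSum_eq_zero_imp_eq_zero]
    intro s
    induction s using Finset.induction_on_max with
    | empty => simp
    | insert m s hm ih =>
      intro v hv h0
      have hms : m ∉ s := fun h => lt_irrefl _ (hm m h)
      rw [Finset.sum_insert hms] at h0
      have hvm : v m = 0 := by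
        refine (Submodule.disjoint_def.1 (hdisj m)) _ ?_ (hv m (Finset.mem_insert_self _ _))
        rw [eq_neg_of_add_eq_zero_left h0]
        refine neg_mem (sum_mem fun i hi => ?_)
        exact Submodule.mem_iSup_of_mem i (Submodule.mem_iSup_of_mem (hm i hi)
          (hCM i (hv i (Finset.mem_insert_of_mem hi))))
      rw [hvm, zero_add] at h0
      intro i hi
      rcases Finset.mem_insert.1 hi with rfl | hi
      · exact hvm
      · exact ih v (fun j hj => hv j (Finset.mem_insert_of_mem hj)) h0 i hi
  have hspan : ∀ i, M i ≤ ⨆ j, C j := by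
    intro i
    induction i using WellFoundedLT.induction with
    | ind i ih =>
      rw [← hsup i]
      exact sup_le (iSup₂_le ih) (le_iSup C i)
  classical
  have hinternal := DirectSum.isInternal_submodule_of_iSupIndep_of_iSup_eq_top hindep
    (top_le_iff.1 (htop ▸ iSup_le hspan))
  exact Module.Free.of_basis (hinternal.collectedBasis fun i => Module.Free.chooseBasis R (C i))

/-- A submodule of a free module over a principal ideal domain with well-ordered basis has a basis
in echelon form. -/
theorem Submodule.exists_echelon_basis {R ι : Type*} [CommRing R] [IsDomain R]
    [IsPrincipalIdealRing R] [LinearOrder ι] [WellFoundedLT ι] (N : Submodule R (ι →₀ R)) :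
    ∃ (I : Set ι) (n : ι → ι →₀ R), (∀ μ, n μ ∈ N) ∧ (∀ μ, ∀ j ∈ (n μ).support, j ≤ μ) ∧
      LinearIndependent R (fun μ : I => n μ) ∧
      ∀ x ∈ N, x ∈ Submodule.span R (n '' {μ | μ ∈ I ∧ ∃ j ∈ x.support, μ ≤ j}) := by
  have hgen : ∀ μ, ∃ y ∈ N, (∀ j ∈ y.support, j ≤ μ) ∧
      ∀ x ∈ N, (∀ j ∈ x.support, j ≤ μ) → y μ ∣ x μ := by
    intro μ
    let 𝔞 : Ideal R := (N ⊓ Finsupp.supported R R (Set.Iic μ)).map (Finsupp.lapply μ)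
    have hmem := Submodule.IsPrincipal.generator_mem 𝔞
    obtain ⟨y, ⟨hyN, hy⟩, hyμ⟩ := hmem
    refine ⟨y, hyN, fun j hj => hy hj, fun x hxN hx => ?_⟩
    have hxa : x μ ∈ 𝔞 := ⟨x, ⟨hxN, fun j hj => hx j hj⟩, rfl⟩
    have : Submodule.IsPrincipal.generator 𝔞 ∣ x μ :=
      (Submodule.IsPrincipal.mem_iff_generator_dvd 𝔞).1 hxa
    rwa [← hyμ] at this
  choose n hnN hn hdvd using hgen
  refine ⟨{μ | n μ μ ≠ 0}, n, hnN, hn, ?_, ?_⟩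
  · rw [linearIndependent_iff]
    intro l hl
    by_contra hne
    obtain ⟨m, hm, hmax⟩ := l.support.exists_max_image id (Finsupp.support_nonempty_iff.2 hne)
    have hlm : l m * n m m = 0 := by
      have := DFunLike.congr_fun hl (m : ι)
      rw [Finsupp.linearCombination_apply, Finsupp.sum, Finsupp.finsetSum_apply,
        Finset.sum_eq_single m] at this
      · simpa using this
      · intro k hk hkm
        have : n k m = 0 := by
          by_contra h
          exact hkm (le_antisymm (hmax k hk) (hn k m (Finsupp.mem_support_iff.2 h)))
        simp [this]
      · exact fun h => (h hm).elim
    exact (mul_ne_zero (Finsupp.mem_support_iff.1 hm) m.2) hlm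
  · have key : ∀ m, ∀ x ∈ N, (∀ j ∈ x.support, j ≤ m) →
        x ∈ Submodule.span R (n '' {μ | μ ∈ {μ | n μ μ ≠ 0} ∧ μ ≤ m}) := by
      intro m
      induction m using WellFoundedLT.induction with
      | ind m ih =>
        have reduced : ∀ x ∈ N, (∀ j ∈ x.support, j ≤ m) → x m = 0 →
            x ∈ Submodule.span R (n '' {μ | μ ∈ {μ | n μ μ ≠ 0} ∧ μ ≤ m}) := by
          intro x hxN hx hxm
          rcases eq_or_ne x 0 with rfl | hne
          · exact zero_mem _
          obtain ⟨k, hk, hmax⟩ :=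
            x.support.exists_max_image id (Finsupp.support_nonempty_iff.2 hne)
          have hkm : k < m := lt_of_le_of_ne (hx k hk) fun h =>
            Finsupp.mem_support_iff.1 hk (h ▸ hxm)
          refine Submodule.span_mono (Set.image_mono ?_) (ih k hkm x hxN hmax)
          exact fun μ hμ => ⟨hμ.1, hμ.2.trans hkm.le⟩
        intro x hxN hx
        obtain ⟨r, hr⟩ := hdvd m x hxN hx
        by_cases hnm : n m m = 0
        · exact reduced x hxN hx (by rw [hr, hnm, zero_mul])
        have hdiff : x - r • n m ∈
            Submodule.span R (n '' {μ | μ ∈ {μ | n μ μ ≠ 0} ∧ μ ≤ m}) := by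
          refine reduced _ (sub_mem hxN (N.smul_mem r (hnN m))) (fun j hj => ?_) ?_
          · by_contra! hlt
            have h1 : x j = 0 := Finsupp.notMem_support_iff.1 fun h => hlt.not_ge (hx j h)
            have h2 : n m j = 0 := Finsupp.notMem_support_iff.1 fun h => hlt.not_ge (hn m j h)
            exact Finsupp.mem_support_iff.1 hj (by simp [h1, h2])
          · simp [hr, mul_comm]
        have hmem : n m ∈ Submodule.span R (n '' {μ | μ ∈ {μ | n μ μ ≠ 0} ∧ μ ≤ m}) :=
          Submodule.subset_span ⟨m, ⟨hnm, le_rfl⟩, rfl⟩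
        simpa using add_mem hdiff (Submodule.smul_mem _ r hmem)
    intro x hxN
    rcases eq_or_ne x 0 with rfl | hne
    · exact zero_mem _
    obtain ⟨k, hk, hmax⟩ := x.support.exists_max_image id (Finsupp.support_nonempty_iff.2 hne)
    refine Submodule.span_mono (Set.image_mono ?_) (key k x hxN hmax)
    exact fun μ hμ => ⟨hμ.1, k, hk, hμ.2⟩

/-- The submodule spanned by the initial segment `a '' Iio α` is a direct summand, with countably
generated complement, of the one spanned by `a '' Iio β`. -/
def SplitsBelow (R : Type*) {ι A : Type*} [Ring R] [AddCommGroup A] [Module R A] [Preorder ι]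
    (a : ι → A) (α β : ι) : Prop :=
  ∃ S : Set A, S.Countable ∧
    Submodule.span R (a '' Set.Iio α) ⊔ Submodule.span R S = Submodule.span R (a '' Set.Iio β) ∧
    Disjoint (Submodule.span R (a '' Set.Iio α)) (Submodule.span R S)

/-- Let `g` be a functional whose values on an echelon basis `n` of the relations among the `a i`
have the independent differentials `single (τ μ) 1`. If these differentials are
transverse to the values of `g` below `α` and to the coefficients of `n` below `β`, then
differentiating `g` produces a splitting. -/
theorem splitsBelow_of_derivation {R ι A : Type*} [CommRing R] [LinearOrder ι] [AddCommGroup A]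
    [Module R A] (d : R →+ (ι →₀ R)) (hd : ∀ x y, d (x * y) = x • d y + y • d x)
    (a : ι → A) {I : Set ι} {n : ι → ι →₀ R}
    (hker : ∀ μ, Finsupp.linearCombination R a (n μ) = 0)
    (hle : ∀ μ, ∀ j ∈ (n μ).support, j ≤ μ)
    (hspan : ∀ x, Finsupp.linearCombination R a x = 0 →
      x ∈ Submodule.span R (n '' {μ | μ ∈ I ∧ ∃ j ∈ x.support, μ ≤ j}))
    {τ : ι → ι} (hτ : Function.Injective τ) (g : (ι →₀ R) →ₗ[R] R)
    (hg : ∀ μ ∈ I, d (g (n μ)) = Finsupp.single (τ μ) 1) {α β : ι}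
    (hcount : (Set.Iio β).Countable) (hαβ : α ≤ β)
    (hα : ∀ ν < α, ∀ κ, α ≤ κ → d (g (Finsupp.single ν 1)) (τ κ) = 0)
    (hβ : ∀ μ < β, ∀ κ, α ≤ κ → κ < β → ∀ j, d (n μ j) (τ κ) = 0) :
    SplitsBelow R a α β := by
  classical
  let q := Finsupp.linearCombination R a
  let J : Set ι := {κ | κ ∈ I ∧ α ≤ κ ∧ κ < β}
  let P : (ι →₀ R) →ₗ[R] (ι →₀ R) := Finsupp.linearCombination R fun ν =>
    ((d (g (Finsupp.single ν 1))).comapDomain τ hτ.injOn).filter (· ∈ J)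
  have hP : ∀ x κ, κ ∈ J → P x κ = x.sum fun ν r => r * d (g (Finsupp.single ν 1)) (τ κ) := by
    intro x κ hκ
    simp only [P, Finsupp.linearCombination_apply, Finsupp.sum, Finsupp.finsetSum_apply,
      Finsupp.smul_apply, smul_eq_mul]
    refine Finset.sum_congr rfl fun ν _ => ?_
    rw [Finsupp.filter_apply_pos _ _ hκ, Finsupp.comapDomain_apply]
  have hP' : ∀ x κ, κ ∉ J → P x κ = 0 := by
    intro x κ hκ
    simp only [P, Finsupp.linearCombination_apply, Finsupp.sum, Finsupp.finsetSum_apply,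
      Finsupp.smul_apply, smul_eq_mul]
    refine Finset.sum_eq_zero fun ν _ => ?_
    rw [Finsupp.filter_apply_neg _ _ hκ, mul_zero]
  have hP_below : ∀ x ∈ Finsupp.supported R R (Set.Iio α), P x = 0 := by
    intro x hx
    ext κ
    by_cases hκ : κ ∈ J
    · rw [hP x κ hκ]
      exact Finset.sum_eq_zero fun ν hν => by simp [hα ν (hx hν) κ hκ.2.1]
    · exact hP' x κ hκ
  have hP_n : ∀ μ ∈ J, P (n μ) = Finsupp.single μ 1 := by
    intro μ hμ
    ext κ
    by_cases hκ : κ ∈ J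
    · have hgn : g (n μ) = (n μ).sum fun ν r => r * g (Finsupp.single ν 1) := by
        conv_lhs => rw [← Finsupp.sum_single (n μ), Finsupp.sum, map_sum]
        refine Finset.sum_congr rfl fun ν _ => ?_
        dsimp only
        rw [← smul_eq_mul, ← map_smul, Finsupp.smul_single_one]
      have h := DFunLike.congr_fun (hg μ hμ.1) (τ κ)
      rw [hgn, Finsupp.sum, map_sum, Finsupp.finsetSum_apply] at h
      rw [hP _ κ hκ, Finsupp.single_apply]
      rw [Finsupp.single_apply] at h
      simp only [hτ.eq_iff] at h
      rw [← h]
      refine Finset.sum_congr rfl fun ν _ => ?_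
      simp [hd, hβ μ hμ.2.2 κ hκ.2.1 hκ.2.2 ν]
    · rw [hP' _ κ hκ, Finsupp.single_eq_of_ne]
      rintro rfl
      exact hκ hμ
  let p := Finsupp.linearCombination R n ∘ₗ P
  have hqp : ∀ x, q (p x) = 0 := by
    intro x
    simp only [p, LinearMap.comp_apply, Finsupp.linearCombination_apply R (P x), Finsupp.sum,
      map_sum, map_smul]
    exact Finset.sum_eq_zero fun κ _ => by rw [show q (n κ) = 0 from hker κ, smul_zero]
  have hn_supp : ∀ μ γ, μ < γ → n μ ∈ Finsupp.supported R R (Set.Iio γ) :=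
    fun μ γ hμ j hj => (hle μ j hj).trans_lt hμ
  let ρ : (ι →₀ R) →ₗ[R] (ι →₀ R) :=
    (Finsupp.supported R R (Set.Iio α)).subtype ∘ₗ Finsupp.restrictDom R R (Set.Iio α)
  have hρ_mem : ∀ x, ρ x ∈ Finsupp.supported R R (Set.Iio α) := fun x => Subtype.coe_prop _
  have hρ_self : ∀ x ∈ Finsupp.supported R R (Set.Iio α), ρ x = x := fun x hx =>
    (Finsupp.filter_eq_self_iff _ x).2 fun j hj => hx (Finsupp.mem_support_iff.2 hj)
  have hmono : Finsupp.supported R R (Set.Iio α) ≤ Finsupp.supported R R (Set.Iio β) :=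
    Finsupp.supported_mono (Set.Iio_subset_Iio hαβ)
  let s : (ι →₀ R) →ₗ[R] A :=
    q ∘ₗ (LinearMap.id - ρ) ∘ₗ (LinearMap.id - p)
  have hs : ∀ x, s x = q x - q (ρ (x - p x)) := by
    intro x
    simp [s, hqp]
  have hs_below : ∀ x ∈ Finsupp.supported R R (Set.Iio α), s x = 0 := by
    intro x hx
    have hpx : p x = 0 := by simp [p, hP_below x hx]
    rw [hs, hpx, sub_zero, hρ_self x hx, sub_self]
  have hs_n : ∀ μ ∈ I, μ < β → s (n μ) = 0 := by
    intro μ hμ hμβ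
    rcases lt_or_ge μ α with h | h
    · exact hs_below _ (hn_supp μ α h)
    · have hpn : p (n μ) = n μ := by simp [p, hP_n μ ⟨hμ, h, hμβ⟩]
      rw [hs, hpn, sub_self, map_zero, map_zero, sub_zero]
      exact hker μ
  have hs_ker : ∀ x ∈ Finsupp.supported R R (Set.Iio β), q x = 0 → s x = 0 := by
    intro x hx hqx
    have : Submodule.span R (n '' {μ | μ ∈ I ∧ ∃ j ∈ x.support, μ ≤ j}) ≤ LinearMap.ker s := by
      rw [Submodule.span_le]
      rintro _ ⟨μ, ⟨hμ, j, hj, hμj⟩, rfl⟩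
      exact hs_n μ hμ (hμj.trans_lt (hx hj))
    exact this (hspan x hqx)
  have hspan_eq : ∀ γ, Submodule.span R (a '' Set.Iio γ) =
      (Finsupp.supported R R (Set.Iio γ)).map q := fun γ =>
    Finsupp.span_image_eq_map_linearCombination R (Set.Iio γ)
  have hspan_S : Submodule.span R ((fun ν => s (Finsupp.single ν 1)) '' Set.Iio β) =
      (Finsupp.supported R R (Set.Iio β)).map s := by
    rw [Finsupp.supported_eq_span_single, Submodule.map_span, Set.image_image]
  refine ⟨(fun ν => s (Finsupp.single ν 1)) '' Set.Iio β, hcount.image _, ?_, ?_⟩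
  · rw [hspan_S, hspan_eq, hspan_eq]
    refine le_antisymm (sup_le (Submodule.map_mono hmono) ?_) ?_
    · rintro _ ⟨x, hx, rfl⟩
      rw [hs, ← map_sub]
      exact Submodule.mem_map_of_mem (sub_mem hx (hmono (hρ_mem _)))
    · rintro _ ⟨x, hx, rfl⟩
      refine Submodule.mem_sup.2 ⟨q (ρ (x - p x)), Submodule.mem_map_of_mem (hρ_mem _), s x,
        Submodule.mem_map_of_mem hx, ?_⟩
      rw [hs, add_sub_cancel]
  · rw [hspan_S, hspan_eq, Submodule.disjoint_def]
    rintro _ ⟨y, hy, hyx⟩ ⟨x, hx, rfl⟩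
    have hq : q (x - (ρ (x - p x) + y)) = 0 := by
      rw [map_sub, map_add, hyx, hs]
      abel
    have hsx := hs_ker _ (sub_mem hx (hmono (add_mem (hρ_mem _) hy))) hq
    rwa [map_sub, hs_below _ (add_mem (hρ_mem _) hy), sub_zero] at hsx

/-- Splittings along a closed unbounded set of initial segments assemble to a basis. -/
theorem Module.Free.of_splitsBelow {R ι A : Type u} [Ring R] [LinearOrder ι] [WellFoundedLT ι]
    [AddCommGroup A] [Module R A] (hfree : IsKappaFree R A (aleph 1)) (a : ι → A)
    (ha : Submodule.span R (Set.range a) = ⊤) (F : ι → Set ι)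
    (hF : ∀ x, ∃ α, x < α ∧ ∀ ν < α, F ν ⊆ Set.Iio α)
    (hsplit : ∀ α, (∀ ν < α, F ν ⊆ Set.Iio α) → ∀ β, α ≤ β → SplitsBelow R a α β) :
    Module.Free R A := by
  let D : Set ι := {α | ∀ ν < α, F ν ⊆ Set.Iio α}
  let M : D → Submodule R A := fun δ => Submodule.span R (a '' Set.Iio (δ : ι))
  have hlub : ∀ δ : D, ∃ σ ∈ D, σ ≤ δ ∧
      (⨆ j, ⨆ (_ : j < δ), M j) = Submodule.span R (a '' Set.Iio σ) := by
    intro δ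
    obtain ⟨σ, hσ, hmin⟩ := WellFounded.has_min (wellFounded_lt (α := ι))
      {b | ∀ j : D, j < δ → (j : ι) ≤ b} ⟨δ, fun j hj => hj.le⟩
    have hlt : ∀ ν < σ, ∃ j : D, j < δ ∧ ν < j := by
      intro ν hν
      by_contra! h
      exact hmin ν h hν
    refine ⟨σ, fun ν hν κ hκ => ?_, not_lt.1 (hmin δ fun j hj => hj.le), le_antisymm ?_ ?_⟩
    · obtain ⟨j, hj, hνj⟩ := hlt ν hν
      exact (j.2 ν hνj hκ).trans_le (hσ j hj)
    · exact iSup₂_le fun j hj =>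
        Submodule.span_mono (Set.image_mono (Set.Iio_subset_Iio (hσ j hj)))
    · rw [Submodule.span_le]
      rintro _ ⟨ν, hν, rfl⟩
      obtain ⟨j, hj, hνj⟩ := hlt ν hν
      exact Submodule.mem_iSup_of_mem j (Submodule.mem_iSup_of_mem hj
        (Submodule.subset_span ⟨ν, hνj, rfl⟩))
  have hcompl : ∀ δ : D, ∃ S : Set A, S.Countable ∧
      (⨆ j, ⨆ (_ : j < δ), M j) ⊔ Submodule.span R S = M δ ∧
      Disjoint (⨆ j, ⨆ (_ : j < δ), M j) (Submodule.span R S) := by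
    intro δ
    obtain ⟨σ, hσ, hσδ, h⟩ := hlub δ
    rw [h]
    exact hsplit σ hσ δ hσδ
  choose S hS hsup hdisj using hcompl
  refine Module.Free.of_wellOrdered_filtration M (fun δ => Submodule.span R (S δ)) hsup hdisj ?_
    fun δ => hfree (S δ) ?_
  · rw [← top_le_iff, ← ha, Submodule.span_le]
    rintro _ ⟨ν, rfl⟩
    obtain ⟨α, hνα, hα⟩ := hF ν
    exact Submodule.mem_iSup_of_mem (⟨α, hα⟩ : D) (Submodule.subset_span ⟨ν, hνα, rfl⟩)
  · rw [← succ_aleph0, Order.lt_succ_iff]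
    exact Cardinal.le_aleph0_iff_set_countable.2 (hS δ)

theorem IsGenerated.exists_span_range_eq_top {R A ι : Type u} [Ring R] [AddCommGroup A]
    [Module R A] {κ : Cardinal.{u}} (h : IsGenerated R A κ) (hι : #ι = κ) :
    ∃ a : ι → A, Submodule.span R (Set.range a) = ⊤ := by
  obtain ⟨S, hS, hspan⟩ := h
  rw [← hι] at hS
  obtain ⟨f⟩ := hS
  refine ⟨Function.extend f Subtype.val 0, top_le_iff.1 (hspan ▸ Submodule.span_mono ?_)⟩
  exact fun x hx => ⟨f ⟨x, hx⟩, f.injective.extend_apply _ _ _⟩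

/-- An injection avoiding a prescribed countable set at each point. -/
theorem exists_injective_notMem_of_countable {ι : Type*} [Uncountable ι] (Z : ι → Set ι)
    (hZ : ∀ i, (Z i).Countable) : ∃ τ : ι → ι, Function.Injective τ ∧ ∀ i, τ i ∉ Z i := by
  have hprod : #(ι × ι) = #ι := by
    rw [mk_prod, lift_id, mul_eq_self (aleph0_le_mk ι)]
  obtain ⟨e⟩ := Cardinal.eq.1 hprod
  have hex : ∀ i, ∃ j, e (i, j) ∉ Z i := by
    intro i
    by_contra! h
    refine Set.not_countable_univ (α := ι) (((hZ i).preimage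
      (e.injective.comp (Prod.mk_right_injective i))).mono fun j _ => h j)
  choose j hj using hex
  exact ⟨fun i => e (i, j i), fun i i' h => congrArg Prod.fst (e.injective h), hj⟩

/-- Over a principal ideal domain with `ℵ₁` differentially independent elements, every
`ℵ₁`-generated `ℵ₁`-free Whitehead module is free. -/
theorem IsWhitehead.free_of_derivation {R ι A : Type u} [CommRing R] [IsDomain R]
    [IsPrincipalIdealRing R] (hι : #ι = aleph 1) (d : R →+ (ι →₀ R))
    (hd : ∀ x y, d (x * y) = x • d y + y • d x) (ht : ∀ i, ∃ t, d t = Finsupp.single i 1)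
    [AddCommGroup A] [Module R A] (hgen : IsGenerated R A (aleph 1))
    (hfree : IsKappaFree R A (aleph 1)) (hA : IsWhitehead R A) : Module.Free R A := by
  obtain ⟨_, _, hc⟩ := exists_wellOrder_countable_Iio ι hι
  have : Uncountable ι := by
    rw [← aleph0_lt_mk_iff, hι]
    exact aleph0_lt_aleph_one
  choose t ht using ht
  obtain ⟨a, ha⟩ := hgen.exists_span_range_eq_top hι
  let q := Finsupp.linearCombination R a
  obtain ⟨I, n, hnN, hle, hli, hspan⟩ := (LinearMap.ker q).exists_echelon_basis
  have hb : ∀ α, ∃ b, α ≤ b ∧ (SplitsBelow R a α b → ∀ β, α ≤ β → SplitsBelow R a α β) := by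
    intro α
    by_cases h : ∀ β, α ≤ β → SplitsBelow R a α β
    · exact ⟨α, le_rfl, fun _ => h⟩
    · push Not at h
      obtain ⟨b, hαb, hb⟩ := h
      exact ⟨b, hαb, fun h => (hb h).elim⟩
  choose b hαb hb using hb
  let Z : ι → Set ι := fun ν => Set.Iio ν ∪
    ⋃ α ∈ Set.Iic ν, ⋃ μ ∈ Set.Iio (b α), ⋃ j ∈ ((n μ).support : Set ι), (d (n μ j)).support
  have hZ : ∀ ν, (Z ν).Countable := fun ν => (hc ν).union <|
    (countable_Iic_of_countable_Iio hc ν).biUnion fun α _ => (hc (b α)).biUnion fun μ _ =>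
      (Finset.countable_toSet _).biUnion fun j _ => Finset.countable_toSet _
  obtain ⟨τ, hτ, hτZ⟩ := exists_injective_notMem_of_countable Z hZ
  have hker_le : LinearMap.ker q ≤ Submodule.span R (Set.range fun μ : I => n μ) := by
    intro x hx
    refine Submodule.span_mono ?_ (hspan x hx)
    rintro _ ⟨μ, hμ, rfl⟩
    exact ⟨⟨μ, hμ.1⟩, rfl⟩
  let Φ : LinearMap.ker q →ₗ[R] R :=
    (Module.Basis.span hli).constr R (fun μ : I => t (τ μ)) ∘ₗ Submodule.inclusion hker_le
  have hΦ : ∀ μ ∈ I, Φ ⟨n μ, hnN μ⟩ = t (τ μ) := by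
    intro μ hμ
    have : Submodule.inclusion hker_le ⟨n μ, hnN μ⟩ = Module.Basis.span hli ⟨μ, hμ⟩ :=
      (Module.Basis.span_apply hli ⟨μ, hμ⟩).symm
    simp only [Φ, LinearMap.comp_apply, this, Module.Basis.constr_basis]
  have hq : Function.Surjective q := by
    rw [← LinearMap.range_eq_top, Finsupp.range_linearCombination, ha]
  obtain ⟨g, hg⟩ := exists_extension_of_isWhitehead hA q hq Φ
  have hg' : ∀ μ ∈ I, d (g (n μ)) = Finsupp.single (τ μ) 1 := fun μ hμ => by
    rw [hg ⟨n μ, hnN μ⟩, hΦ μ hμ, ht]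
  let F : ι → Set ι := fun ν => (d (g (Finsupp.single ν 1))).support
  refine Module.Free.of_splitsBelow hfree a ha F
    (exists_gt_closed_Iio hc F fun ν => Finset.countable_toSet _) fun α hα => hb α ?_
  refine splitsBelow_of_derivation d hd a hnN hle hspan hτ g hg' (hc _) (hαb α) ?_ ?_
  · intro ν hν κ hκ
    by_contra h
    have hlt : τ κ < α := hα ν hν (Finsupp.mem_support_iff.2 h)
    exact hτZ κ (Or.inl (hlt.trans_le hκ))
  · intro μ hμ κ hκ _ j
    by_contra h
    refine hτZ κ (Or.inr (Set.mem_biUnion (show α ∈ Set.Iic κ from hκ) (Set.mem_biUnion hμ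
      (Set.mem_biUnion (x := j) (Finsupp.mem_support_iff.2 fun h0 => h ?_)
        (Finsupp.mem_support_iff.2 h)))))
    rw [h0, map_zero, Finsupp.zero_apply]

/-- Eklof–Shelah, remark after Theorem 2: for `R = 𝓕₁[X]` where
`𝓕₁ = ℚ(t_ν : ν < ω₁)` is the field of rational functions in `ℵ₁` algebraically
independent variables over `ℚ`, the ring `R` is a p.i.d. of cardinality `ℵ₁`, and
every `ℵ₁`-generated `ℵ₁`-free non-free `R`-module `A` satisfies `Ext¹_R(A, R) ≠ 0`;
in particular every `ℵ₁`-generated `ℵ₁`-free Whitehead `R`-module is free. -/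
theorem pid_aleph_one_ext_ne_zero_of_aleph_one_free_not_free (ι : Type u)
    (hι : #ι = aleph 1) :
    IsDomain (Polynomial (FractionRing (MvPolynomial ι ℚ))) ∧
    IsPrincipalIdealRing (Polynomial (FractionRing (MvPolynomial ι ℚ))) ∧
    ¬ IsField (Polynomial (FractionRing (MvPolynomial ι ℚ))) ∧
    #(Polynomial (FractionRing (MvPolynomial ι ℚ))) = aleph 1 ∧
    ∀ (A : Type u) (_ : AddCommGroup A)
      (_ : Module (Polynomial (FractionRing (MvPolynomial ι ℚ))) A),
      IsGenerated (Polynomial (FractionRing (MvPolynomial ι ℚ))) A (aleph 1) →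
      IsKappaFree (Polynomial (FractionRing (MvPolynomial ι ℚ))) A (aleph 1) →
      ¬ Module.Free (Polynomial (FractionRing (MvPolynomial ι ℚ))) A →
      ¬ IsWhitehead (Polynomial (FractionRing (MvPolynomial ι ℚ))) A := by
  obtain ⟨d, hd, ht⟩ := exists_totalDerivative ι (FractionRing (MvPolynomial ι ℚ))
  exact ⟨inferInstance, inferInstance, Polynomial.not_isField _,
    cardinalMk_polynomial_fractionRing ι hι, fun A _ _ hgen hfree hnot hA =>
      hnot (hA.free_of_derivation hι d hd ht hgen hfree)⟩
end

section
/- Let R be a principal ideal domain (not a field), let κ be an infinite cardinal, and let M be an ℵ₁-free R-module whose rank (the supremum of cardinalities of linearly independent subsets of M) is at most κ. Then M is κ-generated, i.e., M is generated by a subset of cardinality ≤ κ. -/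
/-!
Statement 10 (Eklof–Shelah, introductory remark): over a p.i.d. (not a field),
every `ℵ₁`-free module of rank at most `κ` (for `κ` infinite) is `κ`-generated.
-/

open Cardinal

universe u

/-- Over a domain, passing from a submodule to its purification (the elements some nonzero multiple
of which lies in it) does not change the rank. -/
theorem rank_comap_mkQ_torsion {R : Type u} [CommRing R] [IsDomain R] {M : Type u}
    [AddCommGroup M] [Module R M] (N : Submodule R M) :
    Module.rank R ((Submodule.torsion R (M ⧸ N)).comap N.mkQ) = Module.rank R N := by
  set P := (Submodule.torsion R (M ⧸ N)).comap N.mkQ with hP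
  have hle : N ≤ P := fun x hx => by
    simp [hP, (Submodule.Quotient.mk_eq_zero N).2 hx]
  rw [← rank_quotient_add_rank_of_isDomain (N.submoduleOf P),
    (Submodule.submoduleOfEquivOfLe hle).rank_eq]
  suffices h : Module.rank R (P ⧸ N.submoduleOf P) = 0 by rw [h, zero_add]
  rw [rank_eq_zero_iff, (Submodule.Quotient.mk_surjective _).forall]
  rintro ⟨x, hx⟩
  obtain ⟨a, ha⟩ := (Submodule.mem_torsion_iff _).1 (Submodule.mem_comap.1 hx)
  refine ⟨a, nonZeroDivisors.coe_ne_zero a, ?_⟩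
  rw [← Submodule.Quotient.mk_smul, Submodule.Quotient.mk_eq_zero]
  exact (Submodule.Quotient.mk_eq_zero N).1 ha

/-- In a module all of whose countably generated submodules are free, submodules of finite rank are
finitely generated. -/
theorem IsKappaFree.fg_of_rank_lt_aleph0 {R : Type u} [CommRing R] [IsDomain R]
    {M : Type u} [AddCommGroup M] [Module R M] (hfree : IsKappaFree R M (aleph 1))
    (N : Submodule R M) (hN : Module.rank R N < ℵ₀) : N.FG := by
  have hwf : WellFoundedGT {P : Submodule R M // P.FG ∧ P ≤ N} := by
    rw [wellFoundedGT_iff_monotone_chain_condition]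
    intro a
    choose S hSfin hS using fun n => Submodule.fg_def.1 (a n).2.1
    have hsup : Submodule.span R (⋃ n, S n) = ⨆ n, (a n).1 := by
      simp only [Submodule.span_iUnion, hS]
    have hcard : #(⋃ n, S n) < aleph 1 := by
      rw [← succ_aleph0, Order.lt_succ_iff, le_aleph0_iff_set_countable]
      exact Set.countable_iUnion fun n => (hSfin n).countable
    have := hfree _ hcard
    have hle : Submodule.span R (⋃ n, S n) ≤ N := hsup ▸ iSup_le fun n => (a n).2.2
    have hfg : (⨆ n, (a n).1).FG := by
      rw [← hsup, ← Module.Finite.iff_fg, ← Module.rank_lt_aleph0_iff]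
      exact (Submodule.rank_mono hle).trans_lt hN
    have hmono : Monotone fun n => (a n).1 := fun i j h => a.mono h
    obtain ⟨_, ⟨n, rfl⟩, hn⟩ := (Submodule.fg_iff_compact _).1 hfg _ _ (Set.range_nonempty _)
      hmono.directed_le.directedOn_range isLUB_iSup le_rfl
    exact ⟨n, fun m hnm => le_antisymm (a.mono hnm) ((le_iSup (fun n => (a n).1) m).trans hn)⟩
  obtain ⟨P, hP⟩ := hwf.wf.has_min Set.univ ⟨⟨⊥, Submodule.fg_bot, bot_le⟩, trivial⟩
  suffices h : P.1 = N from h ▸ P.2.1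
  refine le_antisymm P.2.2 fun x hx => ?_
  by_contra hxP
  refine hP.2 ⟨P.1 ⊔ R ∙ x, P.2.1.sup (Submodule.fg_span_singleton x),
    sup_le P.2.2 ((Submodule.span_singleton_le_iff_mem _ _).2 hx)⟩ trivial
    (lt_of_le_not_ge (le_sup_left (a := P.1)) fun h => hxP ?_)
  exact h (Submodule.mem_sup_right (Submodule.mem_span_singleton_self x))

/-- An infinite cardinal bounding `α` also bounds the finite subsets of `α`. -/
theorem mk_finset_le_of_aleph0_le {α : Type u} {κ : Cardinal.{u}} (hκ : ℵ₀ ≤ κ) (hα : #α ≤ κ) :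
    #(Finset α) ≤ κ := by
  cases finite_or_infinite α
  · exact mk_le_aleph0.trans hκ
  · rwa [mk_finset_of_infinite]

theorem isGenerated_of_aleph_one_free_of_rank_le {R : Type u} [CommRing R] [IsDomain R]
    [IsPrincipalIdealRing R] (hnf : ¬ IsField R)
    (κ : Cardinal.{u}) (hκ : ℵ₀ ≤ κ)
    (M : Type u) [AddCommGroup M] [Module R M]
    (hfree : IsKappaFree R M (aleph 1))
    (hrank : Module.rank R M ≤ κ) :
    IsGenerated R M κ := by
  obtain ⟨B, hB, hmax⟩ := exists_maximal_linearIndepOn R (id : M → M)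
  have hBκ : #B ≤ κ := hB.linearIndependent.cardinal_le_rank.trans hrank
  let P (F : Finset B) : Submodule R M :=
    (Submodule.torsion R (M ⧸ Submodule.span R ((↑) '' (F : Set B) : Set M))).comap
      (Submodule.mkQ _)
  have hmem {a : R} (ha : a ≠ 0) {x : M} (F : Finset B)
      (h : a • x ∈ Submodule.span R ((↑) '' (F : Set B) : Set M)) : x ∈ P F :=
    (Submodule.mem_torsion_iff _).2 ⟨⟨a, mem_nonZeroDivisors_of_ne_zero ha⟩,
      (Submodule.Quotient.mk_eq_zero _).2 h⟩
  have hfg (F : Finset B) : (P F).FG := by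
    refine hfree.fg_of_rank_lt_aleph0 _ ?_
    rw [rank_comap_mkQ_torsion]
    exact (rank_span_le _).trans_lt (F.finite_toSet.image _).lt_aleph0
  choose G hGfin hG using fun F => Submodule.fg_def.1 (hfg F)
  refine ⟨⋃ F, G F, ?_, ?_⟩
  · refine (mk_iUnion_le G).trans (mul_le_of_le hκ (mk_finset_le_of_aleph0_le hκ hBκ) ?_)
    exact ciSup_le' fun F => (hGfin F).lt_aleph0.le.trans hκ
  · rw [Submodule.span_iUnion, eq_top_iff]
    rintro x -
    obtain ⟨a, ha, hx⟩ : ∃ a : R, a ≠ 0 ∧ a • x ∈ Submodule.span R B := by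
      by_cases hxB : x ∈ B
      · exact ⟨1, one_ne_zero, by simpa using Submodule.subset_span hxB⟩
      · simpa using hmax x hxB
    obtain ⟨T, hTB, hT⟩ := Submodule.mem_span_finite_of_mem_span hx
    classical
    refine Submodule.mem_iSup_of_mem (T.subtype (· ∈ B)) ?_
    rw [hG]
    refine hmem ha _ (Submodule.span_mono ?_ hT)
    exact fun y hy => ⟨⟨y, hTB hy⟩, by simpa using hy, rfl⟩
end
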